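/- Let (A, I) be a Henselian pair and let B and C be A-algebras, each of which is hfp over A with respect to I. Then for any A-algebra homomorphism Φ : B → C, the B-algebra C (via Φ) is hfp over B with respect to the ideal I·B. -/

import Mathlib

universe u

/-- A ring homomorphism `ρ : R →+* H` exhibits `H` as a Henselization of the pair `(R, K)`:
`(H, K·H)` is a Henselian pair, and every map from `(R, K)` to a Henselian pair factors
uniquely through `ρ`. -/
def IsHenselization {R H : Type u} [CommRing R] [CommRing H]
    (K : Ideal R) (ρ : R →+* H) : Prop :=
  HenselianRing H (K.map ρ) ∧
    ∀ (C : Type u) [CommRing C] (J : Ideal C), HenselianRing C J →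
      ∀ f : R →+* C, K.map f ≤ J → ∃! g : H →+* C, g.comp ρ = f

/-- `φ : A →+* B` is Henselian finitely presented (hfp) with respect to `I`:
`B` is a Henselization of `(R, I·R)` for some finitely presented `A`-algebra `R`. -/
def IsHfp {A B : Type u} [CommRing A] [CommRing B] (φ : A →+* B) (I : Ideal A) : Prop :=
  ∃ (R : Type u) (_ : CommRing R) (ψ : A →+* R) (ρ : R →+* B),
    ψ.FinitePresentation ∧ ρ.comp ψ = φ ∧ IsHenselization (I.map ψ) ρ

/-- `φ : A →+* B` is h-formally étale with respect to `I`. -/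
def IsHFormallyEtale {A B : Type u} [CommRing A] [CommRing B] (φ : A →+* B) (I : Ideal A) :
    Prop :=
  ∀ (E C : Type u) [CommRing E] [CommRing C] (e : A →+* E) (c : A →+* C)
    (p : E →+* C) (u : B →+* C),
    p.comp e = c → u.comp φ = c →
    (∃ N : ℕ, 1 ≤ N ∧ Ideal.map e (I ^ N) = ⊥ ∧ Ideal.map c (I ^ N) = ⊥) →
    Function.Surjective p →
    (∃ M : ℕ, 1 ≤ M ∧ RingHom.ker p ^ M = ⊥) →
    ∃! v : B →+* E, v.comp φ = e ∧ p.comp v = u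

/-- `φ : A →+* B` is h-formally smooth with respect to `I`. -/
def IsHFormallySmooth {A B : Type u} [CommRing A] [CommRing B] (φ : A →+* B) (I : Ideal A) :
    Prop :=
  ∀ (E C : Type u) [CommRing E] [CommRing C] (e : A →+* E) (c : A →+* C)
    (p : E →+* C) (u : B →+* C),
    p.comp e = c → u.comp φ = c →
    (∃ N : ℕ, 1 ≤ N ∧ Ideal.map e (I ^ N) = ⊥ ∧ Ideal.map c (I ^ N) = ⊥) →
    Function.Surjective p →
    (∃ M : ℕ, 1 ≤ M ∧ RingHom.ker p ^ M = ⊥) →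
    ∃ v : B →+* E, v.comp φ = e ∧ p.comp v = u

/-- `φ : A →+* B` is h-étale with respect to `I`: `B` is a Henselization of `(R, I·R)`
for some étale `A`-algebra `R`. -/
def IsHEtale {A B : Type u} [CommRing A] [CommRing B] (φ : A →+* B) (I : Ideal A) : Prop :=
  ∃ (R : Type u) (_ : CommRing R) (_ : Algebra A R) (ρ : R →+* B),
    Algebra.Etale A R ∧ ρ.comp (algebraMap A R) = φ ∧
      IsHenselization (I.map (algebraMap A R)) ρ

/-- `φ : A →+* B` is h-smooth with respect to `I`: `B` is a Henselization of `(R, I·R)`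
for some smooth `A`-algebra `R`. -/
def IsHSmooth {A B : Type u} [CommRing A] [CommRing B] (φ : A →+* B) (I : Ideal A) : Prop :=
  ∃ (R : Type u) (_ : CommRing R) (_ : Algebra A R) (ρ : R →+* B),
    Algebra.Smooth A R ∧ ρ.comp (algebraMap A R) = φ ∧
      IsHenselization (I.map (algebraMap A R)) ρ

/-- A ring homomorphism is flat if it makes the target into a flat module over the source. -/
def RingHomFlat {A C : Type u} [CommRing A] [CommRing C] (f : A →+* C) : Prop :=
  letI := f.toAlgebra
  Module.Flat A C

/-- A ring homomorphism is smooth if it makes the target into a smooth algebra over the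
source (smooth = formally smooth + finitely presented). -/
def RingHomSmooth {A C : Type u} [CommRing A] [CommRing C] (f : A →+* C) : Prop :=
  letI := f.toAlgebra
  Algebra.Smooth A C

/-- A ring homomorphism is étale if it makes the target into an étale algebra over the
source (étale = formally étale + finitely presented). -/
def RingHomEtale {A C : Type u} [CommRing A] [CommRing C] (f : A →+* C) : Prop :=
  letI := f.toAlgebra
  Algebra.Etale A C


open Polynomial TensorProduct

/-- maps to Henselian pairs extend uniquely along `σ`, and `σ` is finitely presented. -/
structure HGood {S S' : Type u} [CommRing S] [CommRing S'] (K : Ideal S) (σ : S →+* S') : Prop where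
  fp : σ.FinitePresentation
  univ : ∀ (D : Type u) [CommRing D] (J : Ideal D), HenselianRing D J →
      ∀ f : S →+* D, K.map f ≤ J → ∃! g : S' →+* D, g.comp σ = f

theorem HGood.comp {S S' S'' : Type u} [CommRing S] [CommRing S'] [CommRing S''] {K : Ideal S}
    {σ : S →+* S'} {τ : S' →+* S''} (hσ : HGood K σ) (hτ : HGood (K.map σ) τ) :
    HGood K (τ.comp σ) where
  fp := hτ.fp.comp hσ.fp
  univ D _ J hD f hf := by
    obtain ⟨g, hg, hgu⟩ := hσ.univ D J hD f hf
    obtain ⟨h, hh, hhu⟩ := hτ.univ D J hD g (by rw [Ideal.map_map, hg]; exact hf)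
    refine ⟨h, by change (h.comp (τ.comp σ)) = f; rw [← RingHom.comp_assoc, hh, hg], fun h' hh' => ?_⟩
    apply hhu
    apply hgu
    exact hh'

theorem HGood.id {S : Type u} [CommRing S] (K : Ideal S) : HGood K (RingHom.id S) where
  fp := .id S
  univ D _ J hD f hf := ⟨f, rfl, fun g hg => hg⟩

theorem HGood.baseChange {S S' T : Type u} [CommRing S] [CommRing S'] [CommRing T] {K : Ideal S}
    [Algebra S S'] [Algebra S T] (hσ : HGood K (algebraMap S S')) :
    HGood (K.map (algebraMap S T)) (algebraMap T (T ⊗[S] S')) where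
  fp := by
    have := hσ.fp
    rw [RingHom.finitePresentation_algebraMap] at this ⊢
    infer_instance
  univ D _ J hD f hf := by
    rw [Ideal.map_map] at hf
    obtain ⟨g, hg, hgu⟩ := hσ.univ D J hD _ hf
    let _ : Algebra S D := (f.comp (algebraMap S T)).toAlgebra
    let f' : T →ₐ[S] D := { f with commutes' := fun r => rfl }
    let g' : S' →ₐ[S] D := { g with commutes' := fun r => congr($hg r) }
    refine ⟨(Algebra.TensorProduct.productMap f' g').toRingHom, ?_, fun h hh => ?_⟩
    · ext x
      change Algebra.TensorProduct.productMap f' g' (x ⊗ₜ 1) = f x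
      simp [f']
    · have h1 : ∀ x, h (x ⊗ₜ 1) = f x := fun x => congr($hh x)
      have h2 : ∀ y, h (1 ⊗ₜ y) = g y := by
        have := hgu (h.comp (Algebra.TensorProduct.includeRight (R := S) (A := T) (B := S')).toRingHom) (by
          ext r
          change h (1 ⊗ₜ (algebraMap S S' r)) = f (algebraMap S T r)
          rw [← h1, Algebra.algebraMap_eq_smul_one, Algebra.algebraMap_eq_smul_one,
            TensorProduct.smul_tmul])
        intro y
        exact congr($this y)
      refine RingHom.ext fun z => ?_
      induction z with
      | zero => simp
      | add x y hx hy => rw [map_add, map_add, hx, hy]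
      | tmul x y =>
        have : x ⊗ₜ[S] y = (x ⊗ₜ 1) * (1 ⊗ₜ y) := by simp
        rw [this, map_mul, h1, h2]
        change _ = Algebra.TensorProduct.productMap f' g' _
        simp [f', g']

theorem HGood.join {S S₁ S₂ : Type u} [CommRing S] [CommRing S₁] [CommRing S₂] {K : Ideal S}
    {σ₁ : S →+* S₁} {σ₂ : S →+* S₂} (h₁ : HGood K σ₁) (h₂ : HGood K σ₂) :
    ∃ (T : Type u) (_ : CommRing T) (τ : S →+* T) (j₁ : S₁ →+* T) (j₂ : S₂ →+* T),
      HGood K τ ∧ j₁.comp σ₁ = τ ∧ j₂.comp σ₂ = τ := by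
  let _ := σ₁.toAlgebra
  let _ := σ₂.toAlgebra
  refine ⟨S₁ ⊗[S] S₂, inferInstance, (algebraMap S₁ _).comp σ₁, algebraMap S₁ _,
    Algebra.TensorProduct.includeRight.toRingHom, ?_, rfl, ?_⟩
  · apply h₁.comp
    exact HGood.baseChange (S := S) (S' := S₂) h₂
  · ext r
    change 1 ⊗ₜ (algebraMap S S₂ r) = (algebraMap S S₁ r) ⊗ₜ 1
    rw [Algebra.algebraMap_eq_smul_one, Algebra.algebraMap_eq_smul_one, TensorProduct.smul_tmul]

theorem isUnit_of_hens {D : Type u} [CommRing D] {J : Ideal D} (hD : HenselianRing D J) {y : D}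
    (hy : y - 1 ∈ J) : IsUnit y := by
  have := Ideal.mem_jacobson_bot.1 (hD.jac hy) 1
  simpa using this

theorem HGood.away {S : Type u} [CommRing S] {K : Ideal S} (y : S) (hy : y - 1 ∈ K) :
    HGood K (algebraMap S (Localization.Away y)) where
  fp := by
    rw [RingHom.finitePresentation_algebraMap]
    exact IsLocalization.Away.finitePresentation y
  univ D _ J hD f hf := by
    have hu : IsUnit (f y) := isUnit_of_hens hD (hf (by
      have := Ideal.mem_map_of_mem f hy
      simpa using this))
    refine ⟨IsLocalization.Away.lift y hu, ?_, fun h hh => ?_⟩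
    · exact IsLocalization.Away.lift_comp y hu
    · apply IsLocalization.ringHom_ext (Submonoid.powers y)
      rw [hh, IsLocalization.Away.lift_comp]

theorem HGood.quot {S : Type u} [CommRing S] {K : Ideal S} (L : Ideal S) (hL : L.FG)
    (h : ∀ (D : Type u) [CommRing D] (J : Ideal D), HenselianRing D J →
      ∀ f : S →+* D, K.map f ≤ J → L ≤ RingHom.ker f) :
    HGood K (Ideal.Quotient.mk L) where
  fp := by
    apply RingHom.FinitePresentation.of_surjective _ Ideal.Quotient.mk_surjective
    rwa [Ideal.mk_ker]
  univ D _ J hD f hf := by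
    refine ⟨Ideal.Quotient.lift L f (h D J hD f hf), ?_, fun g hg => ?_⟩
    · exact RingHom.ext fun z => rfl
    · apply Ideal.Quotient.ringHom_ext
      rw [hg]; exact RingHom.ext fun z => rfl

theorem root_unique {D : Type u} [CommRing D] {J : Ideal D} (hD : HenselianRing D J) (f : D[X])
    (x₁ x₂ u a : D) (h₁ : f.eval x₁ = 0) (h₂ : f.eval x₂ = 0) (ha₁ : x₁ - a ∈ J) (ha₂ : x₂ - a ∈ J)
    (hu : f.derivative.eval a * u - 1 ∈ J) : x₁ = x₂ := by
  obtain ⟨c, hc⟩ := exists_mul_sq_add_linear_part_eq_eval_add f x₁ (x₂ - x₁)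
  have e : x₁ + (x₂ - x₁) = x₂ := by ring
  rw [e, h₁, h₂] at hc
  obtain ⟨d, hd⟩ := sub_dvd_eval_sub x₁ a f.derivative
  have hun : IsUnit ((c * (x₂ - x₁) + f.derivative.eval x₁) * u) := by
    apply isUnit_of_hens hD
    have : (c * (x₂ - x₁) + f.derivative.eval x₁) * u - 1 =
      (c * u) * (x₂ - a) + (d * u - c * u) * (x₁ - a) + (f.derivative.eval a * u - 1) := by
      linear_combination u * hd
    rw [this]
    exact J.add_mem (J.add_mem (J.mul_mem_left _ ha₂) (J.mul_mem_left _ ha₁)) hu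
  have hun' := isUnit_of_mul_isUnit_left hun
  have : (c * (x₂ - x₁) + f.derivative.eval x₁) * (x₂ - x₁) = 0 := by linear_combination hc
  have := (hun'.mul_right_eq_zero).1 this
  exact (sub_eq_zero.1 this).symm

theorem HGood.root {S : Type u} [CommRing S] {K : Ideal S} (f : S[X]) (hf : f.Monic) (a u : S)
    (ha : f.eval a ∈ K) (hu : f.derivative.eval a * u - 1 ∈ K) :
    ∃ (T : Type u) (_ : CommRing T) (τ : S →+* T) (x : T), HGood K τ ∧ f.eval₂ τ x = 0 ∧
      x - τ a ∈ K.map τ := by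
  obtain ⟨g, hg⟩ : ∃ g, f = (X - C a) * g + C (f.eval a) := by
    refine ⟨f /ₘ (X - C a), ?_⟩
    rw [← modByMonic_X_sub_C_eq_C_eval, add_comm]
    exact (modByMonic_add_div f (X - C a)).symm
  have hga : f.derivative.eval a = g.eval a := by
    rw [hg]; simp
  rw [hga] at hu
  let P := AdjoinRoot f
  let T := Localization.Away (AdjoinRoot.mk f g)
  let τ : S →+* T := (algebraMap P T).comp (AdjoinRoot.of f)
  let x : T := algebraMap P T (AdjoinRoot.root f)
  have hx : f.eval₂ τ x = 0 := by
    rw [← Polynomial.hom_eval₂, AdjoinRoot.eval₂_root, map_zero]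
  have hgx : IsUnit (g.eval₂ τ x) := by
    have : g.eval₂ τ x = algebraMap P T (AdjoinRoot.mk f g) := by
      rw [← Polynomial.hom_eval₂]; exact congrArg (algebraMap P T) (AdjoinRoot.aeval_eq g)
    rw [this]
    exact IsLocalization.Away.algebraMap_isUnit _
  have hxa : x - τ a ∈ K.map τ := by
    have h0 : eval₂ τ x ((X - C a) * g + C (f.eval a)) = 0 := (congrArg (eval₂ τ x) hg.symm).trans hx
    simp only [eval₂_add, eval₂_mul, eval₂_sub, eval₂_X, eval₂_C] at h0
    obtain ⟨v, hv⟩ := hgx.exists_right_inv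
    have : x - τ a = (-v) * τ (f.eval a) := by
      linear_combination (-(x - τ a)) * hv + v * h0
    rw [this]
    exact Ideal.mul_mem_left _ _ (Ideal.mem_map_of_mem τ ha)
  refine ⟨T, inferInstance, τ, x, ⟨?_, ?_⟩, hx, hxa⟩
  · refine RingHom.FinitePresentation.comp ?_ ?_
    · rw [RingHom.finitePresentation_algebraMap]
      exact IsLocalization.Away.finitePresentation (AdjoinRoot.mk f g)
    · change (algebraMap S (AdjoinRoot f)).FinitePresentation
      rw [RingHom.finitePresentation_algebraMap]
      infer_instance
  · intro D _ J hD φ hφ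
    have hφ' : ∀ k ∈ K, φ k ∈ J := fun k hk => hφ (Ideal.mem_map_of_mem φ hk)
    have hu' : (f.map φ).derivative.eval (φ a) * φ u - 1 ∈ J := by
      have := hφ' _ hu
      rw [← hga] at this
      rw [derivative_map, eval_map_apply]
      simpa using this
    obtain ⟨d, hd, hda⟩ := hD.is_henselian (f.map φ) (hf.map φ) (φ a)
      (by rw [eval_map_apply]; exact hφ' _ ha)
      (by
        rw [isUnit_iff_exists_inv]
        refine ⟨Ideal.Quotient.mk J (φ u), ?_⟩
        rw [← map_mul, ← map_one (Ideal.Quotient.mk J), Ideal.Quotient.eq]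
        exact hu')
    have hd' : f.eval₂ φ d = 0 := by rw [← eval_map]; exact hd
    have hgd : IsUnit (AdjoinRoot.lift φ d hd' (AdjoinRoot.mk f g)) := by
      rw [AdjoinRoot.lift_mk, ← eval_map]
      obtain ⟨w, hw⟩ := sub_dvd_eval_sub d (φ a) (g.map φ)
      refine isUnit_of_mul_isUnit_left (y := φ u) (isUnit_of_hens hD ?_)
      have h1 := hφ' _ hu
      rw [map_sub, map_mul, map_one, ← eval_map_apply] at h1
      have : (g.map φ).eval d * φ u - 1 = (w * φ u) * (d - φ a) +
        ((g.map φ).eval (φ a) * φ u - 1) := by linear_combination φ u * hw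
      rw [this]
      exact J.add_mem (J.mul_mem_left _ hda) h1
    have key : ∀ h : T →+* D, h.comp τ = φ → (f.map φ).eval (h x) = 0 ∧ h x - φ a ∈ J := by
      intro h hh
      constructor
      · rw [eval_map, ← hh, ← hom_eval₂, hx, map_zero]
      · have := Ideal.mem_map_of_mem h hxa
        rw [Ideal.map_map, hh, map_sub] at this
        have h2 := hφ this
        rwa [← hh]
    have uniq : ∀ h₁ h₂ : T →+* D, h₁.comp τ = φ → h₂.comp τ = φ → h₁ = h₂ := by
      intro h₁ h₂ e₁ e₂
      apply IsLocalization.ringHom_ext (Submonoid.powers (AdjoinRoot.mk f g))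
      have ex : h₁ x = h₂ x := root_unique hD (f.map φ) _ _ (φ u) (φ a)
        (key h₁ e₁).1 (key h₂ e₂).1 (key h₁ e₁).2 (key h₂ e₂).2 hu'
      refine RingHom.ext fun z => ?_
      induction z using AdjoinRoot.induction_on with
      | ih p =>
      have hp : algebraMap P T (AdjoinRoot.mk f p) = p.eval₂ τ x := by
        rw [← Polynomial.hom_eval₂]; exact (congrArg (algebraMap P T) (AdjoinRoot.aeval_eq p)).symm
      change h₁ (algebraMap P T (AdjoinRoot.mk f p)) = h₂ (algebraMap P T (AdjoinRoot.mk f p))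
      rw [hp, hom_eval₂, hom_eval₂, e₁, e₂, ex]
    have ex : ∃ h : T →+* D, h.comp τ = φ := by
      refine ⟨IsLocalization.Away.lift (AdjoinRoot.mk f g) hgd, ?_⟩
      change ((IsLocalization.Away.lift (AdjoinRoot.mk f g) hgd).comp (algebraMap P T)).comp
        (AdjoinRoot.of f) = φ
      rw [IsLocalization.Away.lift_comp]
      exact RingHom.ext fun z => AdjoinRoot.lift_of hd'
    obtain ⟨h, hh⟩ := ex
    exact ⟨h, hh, fun h' hh' => uniq _ _ hh' hh⟩

/-- A finitely presented approximation of `ρ : S →+* C`. -/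
structure HPkg {S C : Type u} [CommRing S] [CommRing C] (K : Ideal S) (ρ : S →+* C) where
  T : Type u
  [ring : CommRing T]
  σ : S →+* T
  g : T →+* C
  good : HGood K σ
  comp : g.comp σ = ρ

attribute [instance] HPkg.ring

/-- existence of a transition map -/
def HPkg.Le {S C : Type u} [CommRing S] [CommRing C] {K : Ideal S} {ρ : S →+* C}
    (P Q : HPkg K ρ) : Prop :=
  ∃ j : P.T →+* Q.T, j.comp P.σ = Q.σ ∧ Q.g.comp j = P.g

theorem HPkg.Le.range {S C : Type u} [CommRing S] [CommRing C] {K : Ideal S} {ρ : S →+* C}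
    {P Q : HPkg K ρ} (h : P.Le Q) {c : C} (hc : c ∈ P.g.range) : c ∈ Q.g.range := by
  obtain ⟨j, h1, h2⟩ := h
  obtain ⟨x, rfl⟩ := hc
  exact ⟨j x, congr($h2 x)⟩

/-- elements of `K` lifted to an approximation -/
def HPkg.Lifts {S C : Type u} [CommRing S] [CommRing C] {K : Ideal S} {ρ : S →+* C}
    (P : HPkg K ρ) (c : C) : Prop := ∃ z ∈ K.map P.σ, P.g z = c

theorem HPkg.Le.lifts {S C : Type u} [CommRing S] [CommRing C] {K : Ideal S} {ρ : S →+* C}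
    {P Q : HPkg K ρ} (h : P.Le Q) {c : C} (hc : P.Lifts c) : Q.Lifts c := by
  obtain ⟨j, h1, h2⟩ := h
  obtain ⟨x, hx, rfl⟩ := hc
  refine ⟨j x, ?_, congr($h2 x)⟩
  rw [← h1, ← Ideal.map_map]
  exact Ideal.mem_map_of_mem j hx

section
variable {S C : Type u} [CommRing S] [CommRing C] {K : Ideal S} {ρ : S →+* C}

theorem HPkg.join (h : IsHenselization K ρ) (P Q : HPkg K ρ) :
    ∃ R : HPkg K ρ, P.Le R ∧ Q.Le R := by
  obtain ⟨T, _, τ, j₁, j₂, hτ, h₁, h₂⟩ := P.good.join Q.good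
  obtain ⟨g, hg, -⟩ := hτ.univ C _ h.1 ρ le_rfl
  refine ⟨⟨T, τ, g, hτ, hg⟩, ⟨j₁, h₁, ?_⟩, ⟨j₂, h₂, ?_⟩⟩
  · refine (P.good.univ C _ h.1 ρ le_rfl).unique ?_ P.comp
    change g.comp (j₁.comp P.σ) = ρ
    rw [h₁]; exact hg
  · refine (Q.good.univ C _ h.1 ρ le_rfl).unique ?_ Q.comp
    change g.comp (j₂.comp Q.σ) = ρ
    rw [h₂]; exact hg

theorem HPkg.extend (h : IsHenselization K ρ) (P : HPkg K ρ) {T : Type u} [CommRing T]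
    (τ : P.T →+* T) (hτ : HGood (K.map P.σ) τ) :
    ∃ g : T →+* C, g.comp τ = P.g ∧ HGood K (τ.comp P.σ) ∧ g.comp (τ.comp P.σ) = ρ := by
  obtain ⟨g, hg, -⟩ := hτ.univ C _ h.1 P.g (by rw [Ideal.map_map, P.comp])
  refine ⟨g, hg, P.good.comp hτ, ?_⟩
  rw [← RingHom.comp_assoc, hg, P.comp]

theorem HPkg.quot (h : IsHenselization K ρ) (P : HPkg K ρ) (L : Ideal P.T) (hL : L.FG)
    (hk : L ≤ RingHom.ker P.g) : HGood (K.map P.σ) (Ideal.Quotient.mk L) := by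
  apply HGood.quot L hL
  intro D _ J hD f hf
  rw [Ideal.map_map] at hf
  obtain ⟨k, hk', -⟩ := h.2 D J hD _ hf
  have : k.comp P.g = f := by
    refine (P.good.univ D J hD _ hf).unique ?_ rfl
    rw [RingHom.comp_assoc, P.comp, hk']
  intro x hx
  have hx' : P.g x = 0 := hk hx
  change f x = 0
  rw [← this, RingHom.comp_apply, hx', map_zero]

/-- the subring of elements coming from approximations -/
def hSub (h : IsHenselization K ρ) : Subring C where
  carrier := {c | ∃ P : HPkg K ρ, c ∈ P.g.range}
  mul_mem' := by
    rintro a b ⟨P, hP⟩ ⟨Q, hQ⟩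
    obtain ⟨R, h1, h2⟩ := P.join h Q
    exact ⟨R, mul_mem (h1.range hP) (h2.range hQ)⟩
  add_mem' := by
    rintro a b ⟨P, hP⟩ ⟨Q, hQ⟩
    obtain ⟨R, h1, h2⟩ := P.join h Q
    exact ⟨R, add_mem (h1.range hP) (h2.range hQ)⟩
  neg_mem' := by
    rintro a ⟨P, hP⟩
    exact ⟨P, neg_mem hP⟩
  one_mem' := ⟨⟨S, RingHom.id S, ρ, .id K, rfl⟩, one_mem _⟩
  zero_mem' := ⟨⟨S, RingHom.id S, ρ, .id K, rfl⟩, zero_mem _⟩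

theorem hSub_finset (h : IsHenselization K ρ) (s : Finset C) (hs : ∀ c ∈ s, c ∈ hSub h) :
    ∃ P : HPkg K ρ, ∀ c ∈ s, c ∈ P.g.range := by
  classical
  induction s using Finset.induction_on with
  | empty => exact ⟨⟨S, RingHom.id S, ρ, .id K, rfl⟩, by simp⟩
  | insert a s _ ih =>
    obtain ⟨P, hP⟩ := ih fun c hc => hs c (Finset.mem_insert_of_mem hc)
    obtain ⟨Q, hQ⟩ := hs a (Finset.mem_insert_self _ _)
    obtain ⟨R, h1, h2⟩ := P.join h Q
    refine ⟨R, fun c hc => ?_⟩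
    rcases Finset.mem_insert.1 hc with rfl | hc
    · exact h2.range hQ
    · exact h1.range (hP c hc)

/-- The structure map to the subring. -/
def hRho (h : IsHenselization K ρ) : S →+* hSub h :=
  ρ.codRestrict (hSub h) fun s => ⟨⟨S, RingHom.id S, ρ, .id K, rfl⟩, ⟨s, rfl⟩⟩

/-- The map of an approximation to the subring. -/
def HPkg.g₀ (h : IsHenselization K ρ) (P : HPkg K ρ) : P.T →+* hSub h :=
  P.g.codRestrict (hSub h) fun s => ⟨P, ⟨s, rfl⟩⟩

theorem HPkg.g₀_comp (h : IsHenselization K ρ) (P : HPkg K ρ) :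
    (P.g₀ h).comp P.σ = hRho h := by
  refine RingHom.ext fun x => Subtype.ext ?_
  exact congr($(P.comp) x)

theorem HPkg.g₀_mem (h : IsHenselization K ρ) (P : HPkg K ρ) {z : P.T} (hz : z ∈ K.map P.σ) :
    P.g₀ h z ∈ K.map (hRho h) := by
  rw [← P.g₀_comp h, ← Ideal.map_map]
  exact Ideal.mem_map_of_mem _ hz

theorem hSub_lifts (h : IsHenselization K ρ) (z : hSub h) (hz : z ∈ K.map (hRho h)) :
    ∃ P : HPkg K ρ, P.Lifts z := by
  rw [Ideal.map] at hz
  induction hz using Submodule.span_induction with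
  | mem x hx =>
    obtain ⟨k, hk, rfl⟩ := hx
    exact ⟨⟨S, RingHom.id S, ρ, .id K, rfl⟩, k, by simpa using hk, rfl⟩
  | zero => exact ⟨⟨S, RingHom.id S, ρ, .id K, rfl⟩, 0, zero_mem _, by simp⟩
  | add x y _ _ hx hy =>
    obtain ⟨P, hP⟩ := hx
    obtain ⟨Q, hQ⟩ := hy
    obtain ⟨R, h1, h2⟩ := P.join h Q
    obtain ⟨a, ha, ha'⟩ := h1.lifts hP
    obtain ⟨b, hb, hb'⟩ := h2.lifts hQ
    exact ⟨R, a + b, add_mem ha hb, by rw [map_add, ha', hb']; rfl⟩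
  | smul a x _ hx =>
    obtain ⟨P, hP⟩ := hx
    obtain ⟨Q, hQ⟩ := a.2
    obtain ⟨R, h1, h2⟩ := P.join h Q
    obtain ⟨b, hb, hb'⟩ := h1.lifts hP
    obtain ⟨c, hc⟩ := h2.range hQ
    exact ⟨R, c * b, Ideal.mul_mem_left _ _ hb, by rw [map_mul, hc, hb']; rfl⟩

theorem hSub_jac (h : IsHenselization K ρ) : K.map (hRho h) ≤ Ideal.jacobson ⊥ := by
  have key : ∀ z ∈ K.map (hRho h), IsUnit (z + 1) := by
    intro z hz
    obtain ⟨P, w, hw, hwz⟩ := hSub_lifts h z hz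
    have hg := HGood.away (K := K.map P.σ) (w + 1) (by simpa using hw)
    obtain ⟨g, h1, h2, h3⟩ := P.extend h _ hg
    let Q : HPkg K ρ := ⟨_, _, g, h2, h3⟩
    have hu : IsUnit (algebraMap P.T (Localization.Away (w + 1)) (w + 1)) :=
      IsLocalization.Away.algebraMap_isUnit _
    have := hu.map (Q.g₀ h)
    convert this
    apply Subtype.ext
    change (z : C) + 1 = g.comp (algebraMap P.T (Localization.Away (w + 1))) (w + 1)
    rw [h1, map_add, map_one, hwz]
  intro z hz
  rw [Ideal.mem_jacobson_bot]
  intro y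
  exact key _ (Ideal.mul_mem_right _ _ hz)

theorem hSub_hens (h : IsHenselization K ρ) : HenselianRing (hSub h) (K.map (hRho h)) where
  jac := hSub_jac h
  is_henselian := by
    classical
    intro f hf a ha hu
    obtain ⟨u, hu⟩ : ∃ u, f.derivative.eval a * u - 1 ∈ K.map (hRho h) := by
      obtain ⟨v, hv⟩ := isUnit_iff_exists_inv.1 hu
      obtain ⟨u, rfl⟩ := Ideal.Quotient.mk_surjective v
      refine ⟨u, ?_⟩
      rw [← map_mul, ← map_one (Ideal.Quotient.mk (K.map (hRho h))), Ideal.Quotient.eq] at hv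
      exact hv
    obtain ⟨P₁, hP₁⟩ := hSub_lifts h _ ha
    obtain ⟨P₂, hP₂⟩ := hSub_lifts h _ hu
    obtain ⟨P₃, hP₃⟩ := hSub_finset h
      (insert (a : C) (insert (u : C) (f.coeffs.image Subtype.val))) (by
        intro c hc
        simp only [Finset.mem_insert, Finset.mem_image] at hc
        rcases hc with rfl | rfl | ⟨x, -, rfl⟩
        exacts [a.2, u.2, x.2])
    obtain ⟨P₄, h14, h24⟩ := P₁.join h P₂
    obtain ⟨P, h4, h3⟩ := P₄.join h P₃
    obtain ⟨z₁, hz₁, hz₁'⟩ := h4.lifts (h14.lifts hP₁)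
    obtain ⟨z₂, hz₂, hz₂'⟩ := h4.lifts (h24.lifts hP₂)
    have hP : ∀ c ∈ (insert (a : C) (insert (u : C) (f.coeffs.image Subtype.val))), c ∈ P.g.range :=
      fun c hc => h3.range (hP₃ c hc)
    obtain ⟨a', ha'⟩ := hP a (by simp)
    obtain ⟨u', hu'⟩ := hP u (by simp)
    have hfl : f ∈ Polynomial.lifts (P.g₀ h) := by
      rw [Polynomial.lifts_iff_coeff_lifts]
      intro n
      by_cases hn : f.coeff n = 0
      · rw [hn]; exact ⟨0, map_zero _⟩
      · obtain ⟨y, hy⟩ := hP (f.coeff n) (by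
          simp only [Finset.mem_insert, Finset.mem_image]
          exact Or.inr (Or.inr ⟨_, Polynomial.coeff_mem_coeffs hn, rfl⟩))
        exact ⟨y, Subtype.ext hy⟩
    obtain ⟨f', hf', -, hfm⟩ := Polynomial.lifts_and_natDegree_eq_and_monic hfl hf
    have ha0 : P.g₀ h a' = a := Subtype.ext ha'
    have hu0 : P.g₀ h u' = u := Subtype.ext hu'
    have hz10 : P.g₀ h z₁ = f.eval a := Subtype.ext hz₁'
    have hz20 : P.g₀ h z₂ = f.derivative.eval a * u - 1 := Subtype.ext hz₂'
    let L : Ideal P.T := Ideal.span {f'.eval a' - z₁, f'.derivative.eval a' * u' - 1 - z₂}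
    have e1 : P.g₀ h (f'.eval a') = f.eval a := by
      rw [← eval_map_apply, hf', ha0]
    have e2 : P.g₀ h (f'.derivative.eval a') = f.derivative.eval a := by
      rw [← eval_map_apply, ← derivative_map, hf', ha0]
    have hk : L ≤ RingHom.ker P.g := by
      have : L ≤ RingHom.ker (P.g₀ h) := by
        rw [Ideal.span_le]
        rintro x (rfl | rfl)
        · change P.g₀ h _ = 0
          rw [map_sub, e1, hz10, sub_self]
        · change P.g₀ h _ = 0
          rw [map_sub, map_sub, map_mul, map_one, e2, hu0, hz20, sub_self]
      intro x hx
      exact congrArg Subtype.val (this hx)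
    have hq := P.quot h L ⟨{f'.eval a' - z₁, f'.derivative.eval a' * u' - 1 - z₂}, by simp [L]⟩ hk
    obtain ⟨T, _, τ, x, hτ, hx, hxa⟩ := HGood.root (K := (K.map P.σ).map (Ideal.Quotient.mk L))
      (f'.map (Ideal.Quotient.mk L)) (hfm.map _) (Ideal.Quotient.mk L a') (Ideal.Quotient.mk L u')
      (by
        have : Ideal.Quotient.mk L (f'.eval a') = Ideal.Quotient.mk L z₁ :=
          Ideal.Quotient.eq.2 (Ideal.subset_span (by simp))
        rw [eval_map_apply, this]
        exact Ideal.mem_map_of_mem _ hz₁)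
      (by
        have : Ideal.Quotient.mk L (f'.derivative.eval a' * u' - 1) = Ideal.Quotient.mk L z₂ :=
          Ideal.Quotient.eq.2 (Ideal.subset_span (by simp))
        rw [derivative_map, eval_map_apply, ← map_mul, ← map_one (Ideal.Quotient.mk L), ← map_sub,
          this]
        exact Ideal.mem_map_of_mem _ hz₂)
    obtain ⟨g, h1, h2, h3⟩ := P.extend h _ (hq.comp hτ)
    let Q : HPkg K ρ := ⟨T, _, g, h2, h3⟩
    have hQ : (Q.g₀ h).comp (τ.comp (Ideal.Quotient.mk L)) = P.g₀ h :=
      RingHom.ext fun x => Subtype.ext congr($h1 x)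
    refine ⟨Q.g₀ h x, ?_, ?_⟩
    · rw [IsRoot, ← hf', eval_map, ← hQ, ← hom_eval₂, ← eval₂_map, hx, map_zero]
    · have := Q.g₀_mem h (z := x - τ (Ideal.Quotient.mk L a')) (by
        rw [Ideal.map_map, Ideal.map_map] at hxa
        exact hxa)
      rw [map_sub] at this
      have e : Q.g₀ h (τ (Ideal.Quotient.mk L a')) = a := by
        rw [← ha0, ← hQ]; rfl
      rwa [e] at this

theorem hSub_top (h : IsHenselization K ρ) (c : C) : c ∈ hSub h := by
  obtain ⟨g, hg, -⟩ := h.2 (hSub h) _ (hSub_hens h) (hRho h) le_rfl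
  have : (hSub h).subtype.comp g = RingHom.id C := by
    refine (h.2 C _ h.1 ρ le_rfl).unique ?_ rfl
    rw [RingHom.comp_assoc, hg]
    rfl
  have h2 : (g c : C) = c := congr($this c)
  rw [← h2]
  exact (g c).2

end

theorem isHfp_of_isHfp_isHfp {A B C : Type u} [CommRing A] [CommRing B] [CommRing C]
    [Algebra A B] [Algebra A C]
    (I : Ideal A) [HenselianRing A I]
    (hB : IsHfp (algebraMap A B) I)
    (hC : IsHfp (algebraMap A C) I)
    (Φ : B →ₐ[A] C) :
    IsHfp Φ.toRingHom (I.map (algebraMap A B)) := by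
  classical
  obtain ⟨R, _, ψ, ρ, hψ, hρψ, hR⟩ := hB
  obtain ⟨S, _, ψ', ρ', hψ', hρψ', hS⟩ := hC
  let _ := ψ.toAlgebra
  have : Algebra.FinitePresentation A R := hψ
  obtain ⟨t, ht⟩ := (Algebra.FiniteType.of_finitePresentation (R := A) (A := R)).out
  obtain ⟨P, hP⟩ := hSub_finset hS (t.image fun x => Φ (ρ x)) fun c _ => hSub_top hS c
  have hP' : ∀ x ∈ t, ∃ s, P.g s = Φ (ρ x) := fun x hx => hP _ (Finset.mem_image_of_mem _ hx)
  choose! s hs using hP'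
  have hPc : ∀ z, P.g (P.σ z) = ρ' z := fun z => congr($(P.comp) z)
  let _ : Algebra A P.T := (P.σ.comp ψ').toAlgebra
  have fpT : Algebra.FinitePresentation A P.T := P.good.fp.comp hψ'
  let g' : P.T →ₐ[A] C := { P.g with
    commutes' := fun a => by
      change P.g (P.σ (ψ' a)) = _
      rw [← hρψ', hPc]; rfl }
  let E := B ⊗[A] P.T
  let G : Finset E := t.image fun x => (ρ x) ⊗ₜ[A] 1 - 1 ⊗ₜ[A] (s x)
  let L : Ideal E := Ideal.span G
  let m : E →+* C := (Algebra.TensorProduct.productMap Φ g').toRingHom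
  have hm1 : ∀ b, m (b ⊗ₜ 1) = Φ b := fun b => by
    change Algebra.TensorProduct.productMap Φ g' (b ⊗ₜ 1) = _
    simp
  have hm2 : ∀ y, m (1 ⊗ₜ y) = P.g y := fun b => by
    change Algebra.TensorProduct.productMap Φ g' (1 ⊗ₜ b) = _
    rw [Algebra.TensorProduct.productMap_right_apply]; rfl
  have hL : ∀ x ∈ L, m x = 0 := by
    have : L ≤ RingHom.ker m := by
      rw [Ideal.span_le]
      intro x hx
      obtain ⟨r, hr, rfl⟩ := Finset.mem_image.1 hx
      change m _ = 0
      rw [map_sub, hm1, hm2, hs r hr, sub_self]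
    exact this
  let κ : B →+* E ⧸ L := (Ideal.Quotient.mk L).comp (algebraMap B E)
  let ν : P.T →+* E := (Algebra.TensorProduct.includeRight : P.T →ₐ[A] E).toRingHom
  have hAE : ∀ a : A, (algebraMap A B a) ⊗ₜ[A] (1 : P.T) = 1 ⊗ₜ[A] (P.σ (ψ' a)) := fun a => by
    change _ = 1 ⊗ₜ[A] (algebraMap A P.T a)
    rw [Algebra.algebraMap_eq_smul_one, Algebra.algebraMap_eq_smul_one, TensorProduct.smul_tmul]
  have hC1 : (I.map ψ').map ρ' = I.map (algebraMap A C) := by rw [Ideal.map_map, hρψ']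
  refine ⟨E ⧸ L, inferInstance, κ, Ideal.Quotient.lift L m hL, ?_, ?_, ?_, ?_⟩
  · refine RingHom.FinitePresentation.comp ?_ ?_
    · apply RingHom.FinitePresentation.of_surjective _ Ideal.Quotient.mk_surjective
      rw [Ideal.mk_ker]
      exact ⟨G, rfl⟩
    · rw [RingHom.finitePresentation_algebraMap]
      infer_instance
  · exact RingHom.ext hm1
  · have e : (Ideal.Quotient.lift L m hL).comp (κ.comp (algebraMap A B)) = algebraMap A C := by
      refine RingHom.ext fun a => ?_
      exact (hm1 _).trans (Φ.commutes a)
    rw [Ideal.map_map, Ideal.map_map, RingHom.comp_assoc, e, ← hC1]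
    exact hS.1
  · intro D _ J hD f hf
    rw [Ideal.map_map, Ideal.map_map] at hf
    let fB : B →+* D := f.comp κ
    let fT : P.T →+* D := (f.comp (Ideal.Quotient.mk L)).comp ν
    have hfA : fB.comp (algebraMap A B) = fT.comp (P.σ.comp ψ') := by
      refine RingHom.ext fun a => ?_
      exact congrArg (fun z => f (Ideal.Quotient.mk L z)) (hAE a)
    have hfS : (I.map ψ').map (fT.comp P.σ) ≤ J := by
      rw [Ideal.map_map, RingHom.comp_assoc, ← hfA]
      exact hf
    obtain ⟨g, hg, hgu⟩ := hS.2 D J hD _ hfS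
    have hgT : g.comp P.g = fT := by
      refine (P.good.univ D J hD _ hfS).unique ?_ rfl
      rw [RingHom.comp_assoc, P.comp]; exact hg
    have hgA : (g.comp Φ.toRingHom).comp (algebraMap A B) = fB.comp (algebraMap A B) := by
      rw [hfA, ← hgT]
      refine RingHom.ext fun a => ?_
      change g (Φ (algebraMap A B a)) = g (P.g (P.σ (ψ' a)))
      rw [Φ.commutes, ← hρψ', hPc]; rfl
    have hgR : (g.comp Φ.toRingHom).comp ρ = fB.comp ρ := by
      have hsub : (⊤ : Subalgebra A R) ≤
          { RingHom.eqLocus ((g.comp Φ.toRingHom).comp ρ) (fB.comp ρ) with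
            algebraMap_mem' := fun a => by
              change (g.comp Φ.toRingHom) (ρ (ψ a)) = fB (ρ (ψ a))
              have e : ρ (ψ a) = algebraMap A B a := congr($hρψ a)
              rw [e]
              exact congr($hgA a) } := by
        rw [← ht, Algebra.adjoin_le_iff]
        intro x hx
        change g (Φ (ρ x)) = f (Ideal.Quotient.mk L ((ρ x) ⊗ₜ 1))
        have e : Ideal.Quotient.mk L ((ρ x) ⊗ₜ 1) = Ideal.Quotient.mk L (1 ⊗ₜ (s x)) :=
          Ideal.Quotient.eq.2 (Ideal.subset_span (Finset.mem_image_of_mem _ hx))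
        rw [e, ← hs x hx]
        exact congr($hgT (s x))
      exact RingHom.ext fun r => hsub (Algebra.mem_top (x := r))
    have hgB : g.comp Φ.toRingHom = fB := by
      refine (hR.2 D J hD (fB.comp ρ) ?_).unique hgR rfl
      rw [Ideal.map_map, RingHom.comp_assoc, hρψ]
      exact hf
    refine ⟨g, ?_, fun g₂ hg₂ => ?_⟩
    · apply Ideal.Quotient.ringHom_ext
      refine RingHom.ext fun z => ?_
      change g (m z) = f (Ideal.Quotient.mk L z)
      induction z using TensorProduct.induction_on with
      | zero => simp
      | add x y hx hy => rw [map_add, map_add, hx, hy, map_add, map_add]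
      | tmul x y =>
        have e : x ⊗ₜ[A] y = (x ⊗ₜ 1) * (1 ⊗ₜ y) := by simp
        rw [e, map_mul, map_mul, map_mul, map_mul, hm1, hm2]
        exact congr($hgB x * $hgT y)
    · apply hgu
      change g₂.comp ρ' = _
      refine RingHom.ext fun z => ?_
      change g₂ (ρ' z) = _
      rw [← hPc]
      change g₂ (P.g (P.σ z)) = f (Ideal.Quotient.mk L (1 ⊗ₜ (P.σ z)))
      rw [← hm2, ← hg₂]; rfl
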